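/- arXiv:2109.07845 — 3 statements merged into one kernel-verified Lean document; each statement's English description precedes it below -/
import Mathlib

section
/- With the brace setup below (n ≥ 5), assume self-duality: b_r = b_{m−r} for all 0 ≤ r ≤ m, and there exist invertible matrices U_0, …, U_m with entries in K, with U_0 = (1) and U_m = (c) where c = +1 if n ≡ 2,3 (mod 4) and c = −1 if n ≡ 0,1 (mod 4), such that U_{r−1}·φ_r = φ_{m+1−r}^T·U_r for all 1 ≤ r ≤ m. Then for all indices i, j, k, ℓ, a_1, …, a_{n−4} ∈ {1,…,n−1} we have {i, j, a_1, …, a_{n−4}, k, ℓ} = −{k, ℓ, a_1, …, a_{n−4}, i, j}. -/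
open MvPolynomial

/-- The row vector `P(a_1,a_2)·(∂φ_2/∂x_{a_3})⋯(∂φ_{r+1}/∂x_{a_{r+2}})` (0-based: the
sequence `c` is indexed from 0, `φ r` is the paper's `φ_{r+1}`). -/
noncomputable def braceVec {K : Type*} [Field K] {N : ℕ} {b : ℕ → ℕ}
    (φ : ∀ r : ℕ, Matrix (Fin (b r)) (Fin (b (r + 1))) (MvPolynomial (Fin N) K))
    (P : Fin N → Fin N → Fin (b 1) → K)
    (c : ℕ → Fin N) : ∀ r : ℕ, Fin (b (r + 1)) → MvPolynomial (Fin N) K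
  | 0 => fun q => C (P (c 0) (c 1) q)
  | (r + 1) => Matrix.vecMul (braceVec φ P c r)
      (fun p q => pderiv (c (r + 2)) (φ (r + 1) p q))

/-- The brace symbol `{a_1 a_2 ⋯ a_n} = P(a_1,a_2)·(∂φ_2/∂x_{a_3})⋯(∂φ_{m−1}/∂x_{a_{n−2}})
·Q(a_{n−1},a_n)` (a scalar, realized as a constant polynomial). Here `nn` is the paper's
`n`, `m = nn − 2`, and `h` records `m − 1 = m − 2 + 1`. -/
noncomputable def braceFn {K : Type*} [Field K] {N : ℕ} {b : ℕ → ℕ}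
    (φ : ∀ r : ℕ, Matrix (Fin (b r)) (Fin (b (r + 1))) (MvPolynomial (Fin N) K))
    (P : Fin N → Fin N → Fin (b 1) → K)
    (m : ℕ) (Q : Fin N → Fin N → Fin (b (m - 1)) → K) (h : m - 1 = m - 2 + 1)
    (nn : ℕ) (c : ℕ → Fin N) : MvPolynomial (Fin N) K :=
  ∑ p : Fin (b (m - 1)),
    braceVec φ P c (m - 2) (Fin.cast (congrArg b h) p) * C (Q (c (nn - 2)) (c (nn - 1)) p)

/-!
The scalars `U_r` commute with extracting coefficients and with partial derivatives, so
self-duality of the `φ_r` yields `P(i,j) = Q(i,j)ᵀ U_1`, `U_{m-1} Q(k,ℓ) = c P(k,ℓ)ᵀ` and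
`U_s ∂_aφ_{s+1} = (∂_aφ_{m-s})ᵀ U_{s+1}`. Moving `U_1` through the product defining
`{i, j, a_1, …, a_{n-4}, k, ℓ}` and transposing therefore gives
`c {k, ℓ, a_{n-4}, …, a_1, i, j}`. Applying `∂_a ∂_{a'}` to `φ_r φ_{r+1} = 0` shows that the inner
labels anticommute, so restoring their order costs the sign `(-1)^(n-4 choose 2)`.
-/

section RowChain

open Matrix

variable {σ S : Type*} {ι : ℕ → Type*} [∀ r, Fintype (ι r)]

/-- The row vector `v · A₀(x₀) · A₁(x₁) ⋯ A_{r-1}(x_{r-1})`, for a composable sequence of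
rectangular matrices `A_r`, each depending on a label. -/
def rowChain [NonUnitalNonAssocSemiring S] (A : ∀ r, σ → Matrix (ι r) (ι (r + 1)) S) (v : ι 0 → S)
    (x : ℕ → σ) : ∀ r, ι r → S
  | 0 => v
  | r + 1 => rowChain A v x r ᵥ* A r (x r)

variable [Ring S] {A : ∀ r, σ → Matrix (ι r) (ι (r + 1)) S}

lemma rowChain_rotate {r : ℕ}
    (hA : ∀ i < r, ∀ a a', A i a * A (i + 1) a' = -(A i a' * A (i + 1) a))
    (v : ι 0 → S) (x : ℕ → σ) :
    rowChain A v (fun i => x (i + 1)) r ᵥ* A r (x 0) = (-1 : S) ^ r • rowChain A v x (r + 1) := by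
  induction r with
  | zero => simp [rowChain]
  | succ r ih =>
    calc rowChain A v (fun i => x (i + 1)) r ᵥ* A r (x (r + 1)) ᵥ* A (r + 1) (x 0)
      _ = -(rowChain A v (fun i => x (i + 1)) r ᵥ* A r (x 0) ᵥ* A (r + 1) (x (r + 1))) := by
        rw [vecMul_vecMul, hA r r.lt_succ_self, vecMul_neg, ← vecMul_vecMul]
      _ = -(((-1 : S) ^ r • rowChain A v x (r + 1)) ᵥ* A (r + 1) (x (r + 1))) := by
        rw [ih fun i hi => hA i (hi.trans r.lt_succ_self)]
      _ = (-1 : S) ^ (r + 1) • rowChain A v x (r + 2) := by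
        rw [smul_vecMul, pow_succ, mul_neg_one, neg_smul]; rfl

lemma rowChain_reverse {r : ℕ}
    (hA : ∀ i, i + 1 < r → ∀ a a', A i a * A (i + 1) a' = -(A i a' * A (i + 1) a))
    (v : ι 0 → S) {x y : ℕ → σ} (hxy : ∀ i j, i + j + 1 = r → y i = x j) :
    rowChain A v y r = (-1 : S) ^ r.choose 2 • rowChain A v x r := by
  induction r generalizing x with
  | zero => simp [rowChain]
  | succ r ih =>
    calc rowChain A v y r ᵥ* A r (y r)
      _ = ((-1 : S) ^ r.choose 2 • rowChain A v (fun i => x (i + 1)) r) ᵥ* A r (x 0) := by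
        rw [hxy r 0 rfl, ih (fun i hi => hA i (by omega)) fun i j h => hxy i (j + 1) (by omega)]
      _ = (-1 : S) ^ (r + 1).choose 2 • rowChain A v x (r + 1) := by
        rw [smul_vecMul, rowChain_rotate fun i hi => hA i (by omega), smul_smul, ← pow_add,
          Nat.choose_succ_succ' r 1, Nat.choose_one_right, add_comm (r.choose 2)]

end RowChain

section SelfDual

open Matrix

variable {S : Type*} [CommSemiring S] {ι : ℕ → Type*} [∀ r, Fintype (ι r)] {m : ℕ}
  {e : ∀ s t, s + t = m → ι s ≃ ι t}

/-- The sequence of matrices `φ₀, …, φ_{m-1}` is self-dual via `U₀, …, U_m`: one has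
`U_s φ_s = φ_{m-1-s}ᵀ U_{s+1}`, where the index types in complementary positions are identified
along `e`. -/
def IsSelfDual (e : ∀ s t, s + t = m → ι s ≃ ι t) (U : ∀ r, Matrix (ι r) (ι r) S)
    (φ : ∀ r, Matrix (ι r) (ι (r + 1)) S) : Prop :=
  ∀ s t (h : s + t + 1 = m),
    U s * φ s = (φ t)ᵀ.submatrix (e s (t + 1) h) (e (s + 1) t (by omega)) * U (s + 1)

namespace IsSelfDual

lemma map_linearMap {K T : Type*} [CommSemiring K] [CommSemiring T] [Algebra K S] [Algebra K T]
    {U : ∀ r, Matrix (ι r) (ι r) K}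
    {φ : ∀ r, Matrix (ι r) (ι (r + 1)) S}
    (h : IsSelfDual e (fun r => (U r).map (algebraMap K S)) φ) (L : S →ₗ[K] T) :
    IsSelfDual e (fun r => (U r).map (algebraMap K T)) (fun r => (φ r).map L) := by
  intro s t hst
  ext p q
  simpa only [mul_apply, map_apply, submatrix_apply, transpose_apply, map_sum,
    LinearMap.map_algebraMap_mul, LinearMap.map_mul_algebraMap] using
    congrArg L (congrFun₂ (h s t hst) p q)

lemma middle {e : ∀ s t, s + t = m + 2 → ι s ≃ ι t} {U : ∀ r, Matrix (ι r) (ι r) S}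
    {φ : ∀ r, Matrix (ι r) (ι (r + 1)) S} (h : IsSelfDual e U φ) :
    IsSelfDual (m := m) (fun s t hst => e (s + 1) (t + 1) (by omega)) (fun r => U (r + 1))
      (fun r => φ (r + 1)) :=
  fun s t hst => h (s + 1) (t + 1) (by omega)

variable {U : ∀ r, Matrix (ι r) (ι r) S}

lemma first_row_eq_vecMul [DecidableEq (ι 0)] {e : ∀ s t, s + t = m + 1 → ι s ≃ ι t}
    {φ : ∀ r, Matrix (ι r) (ι (r + 1)) S} (h : IsSelfDual e U φ) [Nonempty (ι 0)]
    (hU : U 0 = 1) {p : ι 1 → S} {q : ι m → S} (hp : ∀ i j, φ 0 i j = p j)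
    (hq : ∀ i j, φ m i j = q i) :
    p = (q ∘ e 1 m (by omega)) ᵥ* U 1 := by
  obtain ⟨i⟩ := ‹Nonempty (ι 0)›
  ext j
  have hdual := h 0 m (by omega)
  rw [hU, Matrix.one_mul] at hdual
  rw [← hp i j, hdual]
  simp only [mul_apply, submatrix_apply, transpose_apply, hq]
  rfl

lemma mulVec_last_col_eq [DecidableEq (ι (m + 1))] {e : ∀ s t, s + t = m + 1 → ι s ≃ ι t}
    {φ : ∀ r, Matrix (ι r) (ι (r + 1)) S} (h : IsSelfDual e U φ) [Nonempty (ι 0)] {ε : S}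
    (hU : U (m + 1) = ε • 1) {p : ι 1 → S} {q : ι m → S} (hp : ∀ i j, φ 0 i j = p j)
    (hq : ∀ i j, φ m i j = q i) :
    U m *ᵥ q = ε • (p ∘ e m 1 rfl) := by
  obtain ⟨j⟩ : Nonempty (ι (m + 1)) := (e 0 (m + 1) (by omega)).nonempty_congr.1 inferInstance
  ext i
  have hdual := h m 0 rfl
  rw [hU, Matrix.mul_smul, Matrix.mul_one] at hdual
  have hij := congrFun₂ hdual i j
  simp only [mul_apply, hq, Matrix.smul_apply, submatrix_apply, transpose_apply, hp] at hij
  exact hij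

variable {σ : Type*} {A : ∀ r, σ → Matrix (ι r) (ι (r + 1)) S}

/-- Pushing `U` through the chain turns each `A_s` into the transpose of its mirror image, and
these transposes can be moved to the other side of the dot product one at a time. -/
lemma exists_rowChain_eq_vecMul (hA : ∀ a, IsSelfDual e U fun r => A r a) {x y : ℕ → σ}
    (hxy : ∀ i j, i + j + 1 = m → y i = x j) (p : ι 0 → S) (q : ι m → S) :
    ∀ s t (h : s + t = m), ∃ w : ι s → S,
      rowChain A ((q ∘ e 0 m (zero_add m)) ᵥ* U 0) x s = w ᵥ* U s ∧
        w ⬝ᵥ (rowChain A p y t ∘ e s t h) = q ⬝ᵥ rowChain A p y m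
  | 0, t, h => by
    obtain rfl : t = m := by omega
    exact ⟨_, rfl, comp_equiv_dotProduct_comp_equiv _ _ _⟩
  | s + 1, t, h => by
    obtain ⟨w, hw, hwp⟩ := exists_rowChain_eq_vecMul hA hxy p q s (t + 1) (by omega)
    let B := (A t (x s))ᵀ.submatrix (e s (t + 1) (by omega)) (e (s + 1) t h)
    refine ⟨w ᵥ* B, ?_, ?_⟩
    · rw [rowChain, hw, vecMul_vecMul, hA (x s) s t (by omega), ← vecMul_vecMul]
    · have hB : B *ᵥ (rowChain A p y t ∘ e (s + 1) t h)
          = rowChain A p y (t + 1) ∘ e s (t + 1) (by omega) := by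
        rw [submatrix_mulVec_equiv, Function.comp_assoc, Equiv.self_comp_symm, Function.comp_id,
          mulVec_transpose, rowChain, hxy t s (by omega)]
      rw [← dotProduct_mulVec, hB, hwp]

theorem rowChain_dotProduct_swap {S : Type*} [CommRing S] {U : ∀ r, Matrix (ι r) (ι r) S}
    {A : ∀ r, σ → Matrix (ι r) (ι (r + 1)) S} (hA : ∀ a, IsSelfDual e U fun r => A r a)
    (hanti : ∀ r, r + 1 < m → ∀ a a', A r a * A (r + 1) a' = -(A r a' * A (r + 1) a))
    {ε : S} {p p' : ι 0 → S} {q q' : ι m → S}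
    (hp : p = (q ∘ e 0 m (zero_add m)) ᵥ* U 0) (hq' : U m *ᵥ q' = ε • (p' ∘ e m 0 rfl))
    {x x' : ℕ → σ} (hx : ∀ i < m, x' i = x i) :
    rowChain A p x m ⬝ᵥ q' = ε * (-1) ^ m.choose 2 * (rowChain A p' x' m ⬝ᵥ q) := by
  let y : ℕ → σ := fun i => x (m - 1 - i)
  have hyx : ∀ i j, i + j + 1 = m → y i = x j := fun i j h => congrArg x (by omega)
  have hyx' : ∀ i j, i + j + 1 = m → y i = x' j := fun i j h =>
    (hyx i j h).trans (hx j (by omega)).symm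
  obtain ⟨w, hw, hwp⟩ := exists_rowChain_eq_vecMul hA hyx p' q m 0 rfl
  calc rowChain A p x m ⬝ᵥ q'
    _ = w ⬝ᵥ U m *ᵥ q' := by rw [hp, hw, dotProduct_mulVec]
    _ = ε * (q ⬝ᵥ rowChain A p' y m) := by
      rw [hq', dotProduct_smul, smul_eq_mul, ← hwp, rowChain]
    _ = ε * (-1) ^ m.choose 2 * (rowChain A p' x' m ⬝ᵥ q) := by
      rw [rowChain_reverse hanti p' hyx', dotProduct_smul, smul_eq_mul, mul_assoc,
        dotProduct_comm]

end IsSelfDual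

lemma isSelfDual_finCongr {b : ℕ → ℕ} (hb : ∀ s t, s + t = m → b s = b t)
    {U : ∀ r, Matrix (Fin (b r)) (Fin (b r)) S}
    {φ : ∀ r, Matrix (Fin (b r)) (Fin (b (r + 1))) S}
    (hdual : ∀ s < m, ∀ (h3 : b (m - (s + 1) + 1) = b s) (h2 : b (m - (s + 1)) = b (s + 1)),
      U s * φ s
        = (φ (m - (s + 1)))ᵀ.submatrix (Fin.cast h3.symm) (Fin.cast h2.symm) * U (s + 1)) :
    IsSelfDual (fun s t h => finCongr (hb s t h)) U φ := by
  intro s t hst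
  obtain rfl : t = m - (s + 1) := by omega
  exact hdual s (by omega) (hb _ _ (by omega)) (hb _ _ (by omega))

end SelfDual

section Polynomial

variable {σ R : Type*}

/-- The coefficient of `x_i x_j`, regarded as a constant polynomial. -/
noncomputable def quadCoeff [CommSemiring R] (i j : σ) :
    MvPolynomial σ R →ₗ[R] MvPolynomial σ R :=
  Algebra.linearMap R (MvPolynomial σ R) ∘ₗ lcoeff R (Finsupp.single i 1 + Finsupp.single j 1)

lemma quadCoeff_comm [CommSemiring R] (i j : σ) :
    (quadCoeff i j : MvPolynomial σ R →ₗ[R] MvPolynomial σ R) = quadCoeff j i := by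
  rw [quadCoeff, add_comm, quadCoeff]

lemma single_add_single_inj_of_le [LinearOrder σ] {i j k l : σ} (hij : i ≤ j) (hkl : k ≤ l) :
    (Finsupp.single i 1 + Finsupp.single j 1 : σ →₀ ℕ)
      = Finsupp.single k 1 + Finsupp.single l 1 ↔ i = k ∧ j = l := by
  rw [Finsupp.single_add_single_eq_single_add_single one_ne_zero one_ne_zero]
  grind

lemma quadCoeff_quadraticForm [CommSemiring R] [LinearOrder σ] [Fintype σ] {f : σ → σ → R}
    (hf : ∀ i j, f i j = f j i) (i j : σ) :
    quadCoeff i j (∑ k, ∑ l, if k ≤ l then C (f k l) * X k * X l else 0) = C (f i j) := by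
  wlog hij : i ≤ j generalizing i j
  · rw [quadCoeff_comm, hf, this j i (le_of_not_ge hij)]
  have hcoeff : ∀ k l, coeff (Finsupp.single i 1 + Finsupp.single j 1)
      (if k ≤ l then C (f k l) * X k * X l else 0)
        = if k = i then if l = j then f i j else 0 else 0 := by
    intro k l
    by_cases hkl : k ≤ l
    · rw [if_pos hkl, X, X, mul_assoc, monomial_mul, C_mul_monomial, coeff_monomial]
      simp only [single_add_single_inj_of_le hkl hij]
      grind
    · rw [if_neg hkl, coeff_zero]
      grind
  simp only [quadCoeff, LinearMap.comp_apply, lcoeff_apply, coeff_sum, hcoeff]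
  simp [MvPolynomial.algebraMap_eq]

lemma pderiv_pderiv_eq_zero_of_isHomogeneous_one [CommSemiring R] {f : MvPolynomial σ R}
    (hf : f.IsHomogeneous 1) (i j : σ) : pderiv i (pderiv j f) = 0 := by
  have hdeg : (pderiv j f).totalDegree = 0 := Nat.le_zero.1 hf.pderiv.totalDegree_le
  rw [totalDegree_eq_zero_iff_eq_C.1 hdeg, pderiv_C]

/-- Apply `∂_i ∂_j` to the quadratic identity `M * M' = 0`. -/
lemma map_pderiv_mul_map_pderiv_anticomm [CommRing R] {α β γ : Type*} [Fintype β]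
    {M : Matrix α β (MvPolynomial σ R)} {M' : Matrix β γ (MvPolynomial σ R)}
    (hM : ∀ p q, (M p q).IsHomogeneous 1) (hM' : ∀ p q, (M' p q).IsHomogeneous 1)
    (hMM' : M * M' = 0) (i j : σ) :
    M.map (pderiv i) * M'.map (pderiv j) = -(M.map (pderiv j) * M'.map (pderiv i)) := by
  ext1 p q
  have hzero : pderiv i (pderiv j ((M * M') p q)) = 0 := by simp [hMM']
  simp only [Matrix.mul_apply, map_sum, Derivation.leibniz, map_add, smul_eq_mul,
    pderiv_pderiv_eq_zero_of_isHomogeneous_one (hM _ _),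
    pderiv_pderiv_eq_zero_of_isHomogeneous_one (hM' _ _), mul_zero, zero_add,
    Finset.sum_add_distrib] at hzero
  simp only [Matrix.neg_apply, Matrix.mul_apply, Matrix.map_apply]
  rw [eq_neg_iff_add_eq_zero, ← hzero]
  simp only [mul_comm]

end Polynomial

lemma neg_one_pow_choose_two {R : Type*} [Ring R] (k : ℕ) :
    (-1 : R) ^ k.choose 2 = if k % 4 = 2 ∨ k % 4 = 3 then -1 else 1 := by
  induction k with
  | zero => simp
  | succ k ih =>
    rw [Nat.choose_succ_succ' k 1, Nat.choose_one_right, pow_add, ih, neg_one_pow_eq_ite]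
    simp only [Nat.even_iff]
    split_ifs <;> first | omega | simp

lemma braceVec_eq_rowChain {K : Type*} [Field K] {N : ℕ} {b : ℕ → ℕ}
    (φ : ∀ r : ℕ, Matrix (Fin (b r)) (Fin (b (r + 1))) (MvPolynomial (Fin N) K))
    (P : Fin N → Fin N → Fin (b 1) → K) (c : ℕ → Fin N) (r : ℕ) :
    braceVec φ P c r = rowChain (ι := fun r => Fin (b (r + 1)))
      (fun r a => (φ (r + 1)).map (pderiv a)) (fun q => C (P (c 0) (c 1) q))
      (fun r => c (r + 2)) r := by
  induction r with
  | zero => rfl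
  | succ r ih => rw [braceVec, ih]; rfl

lemma braceFn_eq_rowChain_dotProduct {K : Type*} [Field K] {N ℓ : ℕ} {b : ℕ → ℕ}
    (φ : ∀ r : ℕ, Matrix (Fin (b r)) (Fin (b (r + 1))) (MvPolynomial (Fin N) K))
    (P : Fin N → Fin N → Fin (b 1) → K) (Q : Fin N → Fin N → Fin (b (ℓ + 1)) → K) (n : ℕ)
    (c : ℕ → Fin N) :
    braceFn φ P (ℓ + 2) Q rfl n c = rowChain (ι := fun r => Fin (b (r + 1)))
      (fun r a => (φ (r + 1)).map (pderiv a)) (fun q => C (P (c 0) (c 1) q))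
      (fun r => c (r + 2)) ℓ ⬝ᵥ fun p => C (Q (c (n - 2)) (c (n - 1)) p) := by
  rw [← braceVec_eq_rowChain]
  rfl

theorem stmt13_general (K : Type*) [Field K] (N n : ℕ) (hn : 4 ≤ n) (m : ℕ) (hm : m = n - 2)
    (b : ℕ → ℕ) (hb0 : b 0 = 1)
    (φ : ∀ r : ℕ, Matrix (Fin (b r)) (Fin (b (r + 1))) (MvPolynomial (Fin N) K))
    (hcomp : ∀ r, 1 ≤ r → r + 3 ≤ m → φ r * φ (r + 1) = 0)
    (hdegmid : ∀ r, 1 ≤ r → r + 2 ≤ m → ∀ p q, (φ r p q).IsHomogeneous 1)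
    (P : Fin N → Fin N → Fin (b 1) → K) (Q : Fin N → Fin N → Fin (b (m - 1)) → K)
    (hPsymm : ∀ i j, P i j = P j i) (hQsymm : ∀ i j, Q i j = Q j i)
    (hP : ∀ p q, φ 0 p q = ∑ i, ∑ j, if i ≤ j then C (P i j q) * X i * X j else 0)
    (hQ : ∀ p q, φ (m - 1) p q = ∑ i, ∑ j, if i ≤ j then C (Q i j p) * X i * X j else 0)
    (hbsym : ∀ r, r ≤ m → b r = b (m - r))
    (U : ∀ r : ℕ, Matrix (Fin (b r)) (Fin (b r)) K) (hU0 : U 0 = 1)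
    (ε : K) (hUm : U m = ε • 1)
    (hdual : ∀ s, s < m →
      ∀ (h3 : b (m - (s + 1) + 1) = b s) (h2 : b (m - (s + 1)) = b (s + 1)),
        (U s).map (fun x => (C x : MvPolynomial (Fin N) K)) * φ s
          = (Matrix.transpose (φ (m - (s + 1)))).submatrix (Fin.cast h3.symm) (Fin.cast h2.symm)
              * (U (s + 1)).map (fun x => (C x : MvPolynomial (Fin N) K)))
    (c : ℕ → Fin N) :
    braceFn φ P m Q (by omega) n c
      = C (ε * (-1) ^ (n - 4).choose 2) * braceFn φ P m Q (by omega) n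
          (fun r => if r = 0 then c (n - 2) else if r = 1 then c (n - 1)
            else if r = n - 2 then c 0 else if r = n - 1 then c 1 else c r) := by
  obtain ⟨ℓ, rfl⟩ : ∃ ℓ, n = ℓ + 4 := ⟨n - 4, by omega⟩
  obtain rfl : m = ℓ + 2 := hm
  generalize hc' : (fun r => if r = 0 then c (ℓ + 4 - 2) else if r = 1 then c (ℓ + 4 - 1)
    else if r = ℓ + 4 - 2 then c 0 else if r = ℓ + 4 - 1 then c 1 else c r) = c'
  obtain ⟨hfirst, hmid, hlast⟩ : (c' 0 = c (ℓ + 2) ∧ c' 1 = c (ℓ + 3)) ∧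
      (∀ r < ℓ, c' (r + 2) = c (r + 2)) ∧ c' (ℓ + 4 - 2) = c 0 ∧ c' (ℓ + 4 - 1) = c 1 := by
    clear * - hc'
    grind
  have hb : ∀ s t, s + t = ℓ + 2 → b s = b t := fun s t h => by
    rw [hbsym s (by omega), show ℓ + 2 - s = t by omega]
  have hself := isSelfDual_finCongr hb hdual
  have hquadP : ∀ i j p q, quadCoeff i j (φ 0 p q) = C (P i j q) := fun i j p q => by
    rw [hP, quadCoeff_quadraticForm fun i j => congrFun (hPsymm i j) q]
  have hquadQ : ∀ i j p q, quadCoeff i j (φ (ℓ + 2 - 1) p q) = C (Q i j p) := fun i j p q => by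
    rw [hQ, quadCoeff_quadraticForm fun i j => congrFun (hQsymm i j) p]
  have : Nonempty (Fin (b 0)) := ⟨⟨0, by omega⟩⟩
  have hPQ := (hself.map_linearMap (quadCoeff (c 0) (c 1))).first_row_eq_vecMul
    (by rw [hU0]; exact Matrix.map_one _ C.map_zero C.map_one) (hquadP _ _) (hquadQ _ _)
  have hQP := (hself.map_linearMap (quadCoeff (c (ℓ + 2)) (c (ℓ + 3)))).mulVec_last_col_eq
    (ε := C ε) (by rw [hUm]; simp [Matrix.smul_one_eq_diagonal, Matrix.diagonal_map])
    (hquadP _ _) (hquadQ _ _)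
  have hanti := fun r (hr : r + 1 < ℓ) => map_pderiv_mul_map_pderiv_anticomm
    (hdegmid (r + 1) (by omega) (by omega)) (hdegmid (r + 2) (by omega) (by omega))
    (hcomp (r + 1) (by omega) (by omega))
  have hswap := IsSelfDual.rowChain_dotProduct_swap
    (fun a => (hself.map_linearMap (pderiv a).toLinearMap).middle) hanti hPQ hQP
    (x := fun r => c (r + 2)) (x' := fun r => c' (r + 2)) hmid
  rw [braceFn_eq_rowChain_dotProduct, braceFn_eq_rowChain_dotProduct, hfirst.1, hfirst.2,
    hlast.1, hlast.2]
  simpa using hswap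

/-- In the brace setup (`n ≥ 5`), assuming Gorenstein self-duality — `b_r =
b_{m−r}` and invertible scalar matrices `U_0 = 1, U_1, …, U_m = (c)` with
`U_{r−1}·φ_r = φ_{m+1−r}ᵀ·U_r`, where `c = +1` if `n ≡ 2,3 (mod 4)` and `c = −1` if
`n ≡ 0,1 (mod 4)` — the brace symbol satisfies
`{i, j, a_1, …, a_{n−4}, k, ℓ} = −{k, ℓ, a_1, …, a_{n−4}, i, j}`. -/
theorem stmt13 (K : Type*) [Field K] (n : ℕ) (hn : 5 ≤ n) (m : ℕ) (hm : m = n - 2)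
    (b : ℕ → ℕ) (hbpos : ∀ r, r ≤ m → 0 < b r) (hb0 : b 0 = 1) (hbm : b m = 1)
    (φ : ∀ r : ℕ, Matrix (Fin (b r)) (Fin (b (r + 1))) (MvPolynomial (Fin (n - 1)) K))
    (hcomp : ∀ r, r + 2 ≤ m → φ r * φ (r + 1) = 0)
    (hdeg1 : ∀ p q, (φ 0 p q).IsHomogeneous 2)
    (hdegm : ∀ p q, (φ (m - 1) p q).IsHomogeneous 2)
    (hdegmid : ∀ r, 1 ≤ r → r + 2 ≤ m → ∀ p q, (φ r p q).IsHomogeneous 1)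
    (P : Fin (n - 1) → Fin (n - 1) → Fin (b 1) → K)
    (Q : Fin (n - 1) → Fin (n - 1) → Fin (b (m - 1)) → K)
    (hPsymm : ∀ i j, P i j = P j i) (hQsymm : ∀ i j, Q i j = Q j i)
    (hP : ∀ (p : Fin (b 0)) (q : Fin (b 1)),
      φ 0 p q = ∑ i : Fin (n - 1), ∑ j : Fin (n - 1),
        if i ≤ j then C (P i j q) * X i * X j else 0)
    (hQ : ∀ (p : Fin (b (m - 1))) (q : Fin (b (m - 1 + 1))),
      φ (m - 1) p q = ∑ i : Fin (n - 1), ∑ j : Fin (n - 1),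
        if i ≤ j then C (Q i j p) * X i * X j else 0)
    (hbsym : ∀ r, r ≤ m → b r = b (m - r))
    (U : ∀ r : ℕ, Matrix (Fin (b r)) (Fin (b r)) K)
    (hU : ∀ r, r ≤ m → IsUnit (U r))
    (hU0 : U 0 = 1)
    (cval : K) (hcval : cval = if n % 4 = 2 ∨ n % 4 = 3 then 1 else -1)
    (hUm : U m = cval • (1 : Matrix (Fin (b m)) (Fin (b m)) K))
    (hdual : ∀ s, s < m →
      ∀ (h3 : b (m - (s + 1) + 1) = b s) (h2 : b (m - (s + 1)) = b (s + 1)),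
        (U s).map (fun x => (C x : MvPolynomial (Fin (n - 1)) K)) * φ s
          = (Matrix.transpose (φ (m - (s + 1)))).submatrix (Fin.cast h3.symm) (Fin.cast h2.symm)
              * (U (s + 1)).map (fun x => (C x : MvPolynomial (Fin (n - 1)) K)))
    (c : ℕ → Fin (n - 1)) :
    braceFn φ P m Q (by omega) n c
      = - braceFn φ P m Q (by omega) n
          (fun r => if r = 0 then c (n - 2) else if r = 1 then c (n - 1)
            else if r = n - 2 then c 0 else if r = n - 1 then c 1 else c r) := by
  have hsign : cval * (-1) ^ (n - 4).choose 2 = -1 := by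
    rw [hcval, neg_one_pow_choose_two, show (n - 4) % 4 = n % 4 by omega]
    split_ifs <;> simp
  rw [stmt13_general K (n - 1) n (by omega) m hm b hb0 φ (fun r _ hr => hcomp r (by omega)) hdegmid
    P Q hPsymm hQsymm hP hQ hbsym U hU0 cval hUm hdual c, hsign, C_neg, C_1, neg_one_mul]
end

section
/- With the brace setup below (n ≥ 5), for all pairwise distinct i, j, k ∈ {1,…,n−1} and all a_1, …, a_{n−3} ∈ {1,…,n−1} we have {i, j, k, a_1, …, a_{n−3}} + {j, k, i, a_1, …, a_{n−3}} + {k, i, j, a_1, …, a_{n−3}} = 0. -/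
open MvPolynomial

/-!
Apply `∂_i ∂_j ∂_k` to `φ_1 φ_2 = 0`. Since `φ_1` is quadratic and `φ_2` is linear, the only
Leibniz terms that survive put two derivatives on `φ_1` and one on `φ_2`. For distinct `a, d` the
derivative `∂_a ∂_d φ_1` is `P(a,d)`, so these terms are the three cyclic products
`P(i,j) ∂_k φ_2`, `P(j,k) ∂_i φ_2`, `P(k,i) ∂_j φ_2`, whose sum therefore vanishes. Multiplying on
the right by the factors coming from the common tail gives the relation between braces.
-/

section Derivatives

variable {σ R : Type*} [CommSemiring R]

theorem pderiv_eq_zero_of_isHomogeneous_zero {f : MvPolynomial σ R} (hf : f.IsHomogeneous 0)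
    (i : σ) : pderiv i f = 0 := by
  rw [totalDegree_eq_zero_iff_eq_C.1 ((totalDegree_zero_iff_isHomogeneous σ).2 hf), pderiv_C]

theorem pderiv_pderiv_pderiv_mul {f g : MvPolynomial σ R} (hf : f.IsHomogeneous 2)
    (hg : g.IsHomogeneous 1) (i j k : σ) :
    pderiv i (pderiv j (pderiv k (f * g))) =
      pderiv i (pderiv j f) * pderiv k g + pderiv j (pderiv k f) * pderiv i g +
        pderiv i (pderiv k f) * pderiv j g := by
  have hf₃ : pderiv i (pderiv j (pderiv k f)) = 0 :=
    pderiv_eq_zero_of_isHomogeneous_zero hf.pderiv.pderiv i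
  have hg₂ (a d : σ) : pderiv a (pderiv d g) = 0 :=
    pderiv_eq_zero_of_isHomogeneous_zero hg.pderiv a
  simp only [pderiv_mul, map_add, map_zero, hf₃, hg₂]
  ring

theorem sum_pderiv_pderiv_mul_pderiv_eq_zero {ι : Type*} [Fintype ι] {f g : ι → MvPolynomial σ R}
    (hf : ∀ p, (f p).IsHomogeneous 2) (hg : ∀ p, (g p).IsHomogeneous 1)
    (hfg : ∑ p, f p * g p = 0) (i j k : σ) :
    ∑ p, (pderiv i (pderiv j (f p)) * pderiv k (g p) +
      pderiv j (pderiv k (f p)) * pderiv i (g p) +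
      pderiv i (pderiv k (f p)) * pderiv j (g p)) = 0 := by
  simp only [← pderiv_pderiv_pderiv_mul (hf _) (hg _), ← map_sum, hfg, map_zero]

end Derivatives

section QuadraticPoly

variable {σ R : Type*} [Fintype σ] [CommSemiring R]

/-- The quadratic polynomial `∑ U(i,j) x_i x_j` over all ordered pairs `(i,j)`; `U` need not be
symmetric, so that an expansion over `i ≤ j` is the case of a triangular `U`. -/
noncomputable def quadraticPoly (U : σ → σ → R) : MvPolynomial σ R :=
  ∑ i, ∑ j, C (U i j) * X i * X j

theorem isHomogeneous_quadraticPoly (U : σ → σ → R) : (quadraticPoly U).IsHomogeneous 2 :=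
  .sum _ _ _ fun i _ => .sum _ _ _ fun j _ =>
    (isHomogeneous_C_mul_X (U i j) i).mul (isHomogeneous_X R j)

theorem pderiv_pderiv_quadraticPoly (U : σ → σ → R) (a d : σ) :
    pderiv a (pderiv d (quadraticPoly U)) = C (U a d + U d a) := by
  classical
  have hX (u v : σ) : pderiv u (X v : MvPolynomial σ R) = if v = u then 1 else 0 := by
    rw [pderiv_X, Pi.single_apply]
  have hterm (i j : σ) : pderiv a (pderiv d (C (U i j) * X i * X j)) =
      (if i = a then if j = d then C (U i j) else 0 else 0) +
        (if i = d then if j = a then C (U i j) else 0 else 0) := by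
    simp only [mul_assoc, pderiv_C_mul, pderiv_mul (f := X i), hX, map_add]
    split_ifs <;> simp_all [mul_add]
  simp only [quadraticPoly, map_sum, hterm, Finset.sum_add_distrib, Finset.sum_ite_irrel,
    Finset.sum_const_zero, Finset.sum_ite_eq', Finset.mem_univ, if_true, map_add]

variable [LinearOrder σ]

theorem sum_ite_le_eq_quadraticPoly (P : σ → σ → R) :
    (∑ i, ∑ j, if i ≤ j then C (P i j) * X i * X j else 0 : MvPolynomial σ R) =
      quadraticPoly fun i j => if i ≤ j then P i j else 0 := by
  refine Finset.sum_congr rfl fun i _ => Finset.sum_congr rfl fun j _ => ?_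
  by_cases hij : i ≤ j <;> simp [hij]

theorem pderiv_pderiv_quadraticPoly_ite_le {P : σ → σ → R} (hP : ∀ i j, P i j = P j i) {a d : σ}
    (had : a ≠ d) :
    pderiv a (pderiv d (quadraticPoly fun i j => if i ≤ j then P i j else 0)) = C (P a d) := by
  rw [pderiv_pderiv_quadraticPoly]
  rcases had.lt_or_gt with h | h
  · simp [h.le, h.not_ge]
  · simp [h.le, h.not_ge, hP d a]

end QuadraticPoly

section Brace

variable {K : Type*} [Field K] {N : ℕ} {b : ℕ → ℕ}
  {φ : ∀ r : ℕ, Matrix (Fin (b r)) (Fin (b (r + 1))) (MvPolynomial (Fin N) K)}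
  {P : Fin N → Fin N → Fin (b 1) → K}

section CommonTail

variable {ι : Type*} {s : Finset ι} {a : ι → ℕ → Fin N} {c : ℕ → Fin N} {r₀ : ℕ}

theorem sum_braceVec_eq_zero_of_le (ha : ∀ t ∈ s, ∀ l, r₀ + 2 ≤ l → a t l = c l)
    (h₀ : ∑ t ∈ s, braceVec φ P (a t) r₀ = 0) {r : ℕ} (hr : r₀ ≤ r) :
    ∑ t ∈ s, braceVec φ P (a t) r = 0 := by
  induction r, hr using Nat.le_induction with
  | base => exact h₀
  | succ r hr ih =>
    let A : Matrix (Fin (b (r + 1))) (Fin (b (r + 1 + 1))) (MvPolynomial (Fin N) K) :=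
      (φ (r + 1)).map (pderiv (c (r + 2)))
    calc ∑ t ∈ s, braceVec φ P (a t) (r + 1)
        = ∑ t ∈ s, Matrix.vecMul (braceVec φ P (a t) r) A := by
          refine Finset.sum_congr rfl fun t ht => ?_
          rw [braceVec, ha t ht (r + 2) (by lia)]
          rfl
      _ = 0 := by rw [← Matrix.sum_vecMul, ih, Matrix.zero_vecMul]

theorem sum_braceFn_eq_zero (ha : ∀ t ∈ s, ∀ l, r₀ + 2 ≤ l → a t l = c l)
    (h₀ : ∑ t ∈ s, braceVec φ P (a t) r₀ = 0) {m n : ℕ} (hm : r₀ + 2 ≤ m) (hn : r₀ + 4 ≤ n)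
    (Q : Fin N → Fin N → Fin (b (m - 1)) → K) (h : m - 1 = m - 2 + 1) :
    ∑ t ∈ s, braceFn φ P m Q h n (a t) = 0 := by
  have hvec : ∑ t ∈ s, braceVec φ P (a t) (m - 2) = 0 :=
    sum_braceVec_eq_zero_of_le ha h₀ (by lia)
  have hfn : ∀ t ∈ s, braceFn φ P m Q h n (a t) = ∑ p,
      braceVec φ P (a t) (m - 2) (Fin.cast (congrArg b h) p) * C (Q (c (n - 2)) (c (n - 1)) p) :=
    fun t ht => by rw [braceFn, ha t ht (n - 2) (by lia), ha t ht (n - 1) (by lia)]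
  rw [Finset.sum_congr rfl hfn, Finset.sum_comm]
  refine Finset.sum_eq_zero fun p _ => ?_
  rw [← Finset.sum_mul, ← Finset.sum_apply, hvec, Pi.zero_apply, zero_mul]

end CommonTail

/-- The index sequence `i, j, k, c 3, c 4, …`: the entries of `c` at positions `0, 1, 2` are
replaced rather than shifted. -/
def replaceFirstThree {α : Type*} (i j k : α) (c : ℕ → α) : ℕ → α :=
  fun r => if r = 0 then i else if r = 1 then j else if r = 2 then k else c r

theorem replaceFirstThree_of_three_le {α : Type*} (i j k : α) (c : ℕ → α) {r : ℕ} (hr : 3 ≤ r) :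
    replaceFirstThree i j k c r = c r := by
  simp [replaceFirstThree, show r ≠ 0 by lia, show r ≠ 1 by lia, show r ≠ 2 by lia]

theorem braceVec_replaceFirstThree_one (i j k : Fin N) (c : ℕ → Fin N) (q : Fin (b 2)) :
    braceVec φ P (replaceFirstThree i j k c) 1 q = ∑ p, C (P i j p) * pderiv k (φ 1 p q) :=
  rfl

theorem braceVec_one_cyclic_sum_eq_zero (hb0 : 0 < b 0) (hcomp : φ 0 * φ 1 = 0)
    (hlin : ∀ p q, (φ 1 p q).IsHomogeneous 1) (hPsymm : ∀ i j, P i j = P j i)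
    (hP : ∀ p q, φ 0 p q = ∑ i, ∑ j, if i ≤ j then C (P i j q) * X i * X j else 0)
    {i j k : Fin N} (hij : i ≠ j) (hjk : j ≠ k) (hik : i ≠ k) (c : ℕ → Fin N) :
    braceVec φ P (replaceFirstThree i j k c) 1 + braceVec φ P (replaceFirstThree j k i c) 1 +
      braceVec φ P (replaceFirstThree k i j c) 1 = 0 := by
  have hφ₀ (p q) : φ 0 p q = quadraticPoly fun i j => if i ≤ j then P i j q else 0 := by
    rw [hP, sum_ite_le_eq_quadraticPoly fun i j => P i j q]
  have hquad (p q) : (φ 0 p q).IsHomogeneous 2 := hφ₀ p q ▸ isHomogeneous_quadraticPoly _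
  have hPderiv {a d : Fin N} (had : a ≠ d) (p q) :
      pderiv a (pderiv d (φ 0 p q)) = C (P a d q) := by
    rw [hφ₀, pderiv_pderiv_quadraticPoly_ite_le (fun i j => congrFun (hPsymm i j) q) had]
  ext1 q
  have hrow : ∑ p, φ 0 ⟨0, hb0⟩ p * φ 1 p q = 0 := congrFun₂ hcomp ⟨0, hb0⟩ q
  have hcyc := sum_pderiv_pderiv_mul_pderiv_eq_zero (hquad _) (hlin · q) hrow i j k
  simpa only [Pi.add_apply, Pi.zero_apply, braceVec_replaceFirstThree_one, hPderiv hij,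
    hPderiv hjk, hPderiv hik, hPsymm k i, Finset.sum_add_distrib] using hcyc

end Brace

theorem stmt14_general {K : Type*} [Field K] {N n m : ℕ} (hn : 5 ≤ n) (hm : m = n - 2)
    {b : ℕ → ℕ} (hb0 : 0 < b 0)
    (φ : ∀ r : ℕ, Matrix (Fin (b r)) (Fin (b (r + 1))) (MvPolynomial (Fin N) K))
    (hcomp : φ 0 * φ 1 = 0) (hlin : ∀ p q, (φ 1 p q).IsHomogeneous 1)
    (P : Fin N → Fin N → Fin (b 1) → K) (Q : Fin N → Fin N → Fin (b (m - 1)) → K)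
    (hPsymm : ∀ i j, P i j = P j i)
    (hP : ∀ p q, φ 0 p q = ∑ i, ∑ j, if i ≤ j then C (P i j q) * X i * X j else 0)
    {i j k : Fin N} (hij : i ≠ j) (hjk : j ≠ k) (hik : i ≠ k) (c : ℕ → Fin N) :
    braceFn φ P m Q (by omega) n (replaceFirstThree i j k c)
      + braceFn φ P m Q (by omega) n (replaceFirstThree j k i c)
      + braceFn φ P m Q (by omega) n (replaceFirstThree k i j c) = 0 := by
  let a : Fin 3 → ℕ → Fin N :=
    ![replaceFirstThree i j k c, replaceFirstThree j k i c, replaceFirstThree k i j c]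
  have htail : ∀ t ∈ Finset.univ, ∀ l, 1 + 2 ≤ l → a t l = c l := by
    intro t _ l hl
    fin_cases t <;> exact replaceFirstThree_of_three_le _ _ _ c hl
  have hbase : ∑ t, braceVec φ P (a t) 1 = 0 :=
    (Fin.sum_univ_three _).trans <|
      braceVec_one_cyclic_sum_eq_zero hb0 hcomp hlin hPsymm hP hij hjk hik c
  have hsum := sum_braceFn_eq_zero htail hbase (m := m) (n := n) (by lia) (by lia) Q (by lia)
  rwa [Fin.sum_univ_three] at hsum

/-- In the brace setup (`n ≥ 5`), for pairwise distinct `i, j, k`: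
`{i, j, k, a_1, …, a_{n−3}} + {j, k, i, a_1, …, a_{n−3}} + {k, i, j, a_1, …, a_{n−3}} = 0`.
(0-based: the common tail `a_1, …, a_{n−3}` occupies positions `3, …, n − 1`, given by the
sequence `c`.) -/
theorem stmt14 (K : Type*) [Field K] (n : ℕ) (hn : 5 ≤ n) (m : ℕ) (hm : m = n - 2)
    (b : ℕ → ℕ) (hbpos : ∀ r, r ≤ m → 0 < b r) (hb0 : b 0 = 1) (hbm : b m = 1)
    (φ : ∀ r : ℕ, Matrix (Fin (b r)) (Fin (b (r + 1))) (MvPolynomial (Fin (n - 1)) K))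
    (hcomp : ∀ r, r + 2 ≤ m → φ r * φ (r + 1) = 0)
    (hdeg1 : ∀ p q, (φ 0 p q).IsHomogeneous 2)
    (hdegm : ∀ p q, (φ (m - 1) p q).IsHomogeneous 2)
    (hdegmid : ∀ r, 1 ≤ r → r + 2 ≤ m → ∀ p q, (φ r p q).IsHomogeneous 1)
    (P : Fin (n - 1) → Fin (n - 1) → Fin (b 1) → K)
    (Q : Fin (n - 1) → Fin (n - 1) → Fin (b (m - 1)) → K)
    (hPsymm : ∀ i j, P i j = P j i) (hQsymm : ∀ i j, Q i j = Q j i)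
    (hP : ∀ (p : Fin (b 0)) (q : Fin (b 1)),
      φ 0 p q = ∑ i : Fin (n - 1), ∑ j : Fin (n - 1),
        if i ≤ j then C (P i j q) * X i * X j else 0)
    (hQ : ∀ (p : Fin (b (m - 1))) (q : Fin (b (m - 1 + 1))),
      φ (m - 1) p q = ∑ i : Fin (n - 1), ∑ j : Fin (n - 1),
        if i ≤ j then C (Q i j p) * X i * X j else 0)
    (i j k : Fin (n - 1)) (hij : i ≠ j) (hjk : j ≠ k) (hik : i ≠ k)
    (c : ℕ → Fin (n - 1)) :
    braceFn φ P m Q (by omega) n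
        (fun r => if r = 0 then i else if r = 1 then j else if r = 2 then k else c r)
      + braceFn φ P m Q (by omega) n
          (fun r => if r = 0 then j else if r = 1 then k else if r = 2 then i else c r)
      + braceFn φ P m Q (by omega) n
          (fun r => if r = 0 then k else if r = 1 then i else if r = 2 then j else c r)
      = 0 := by
  exact stmt14_general hn hm (hbpos 0 m.zero_le) φ (hcomp 0 (by lia))
    (hdegmid 1 le_rfl (by lia)) P Q hPsymm hP hij hjk hik c
end

section
/- With the brace setup below (n ≥ 5), fix distinct i, j ∈ {1,…,n−1}. For a sequence a_1, …, a_{n−3} that is a permutation of the list 1, 2, …, î, …, ĵ, …, n−1 (the integers 1 to n−1 with i and j omitted, in increasing order), with ν the sign of that permutation, set A := ν·({i, j, a_1, …, a_{n−3}, i} + {i, i, a_1, …, a_{n−3}, j}). Then A does not depend on the choice of the permutation a_1, …, a_{n−3}: any two such choices give the same value of A. -/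
open MvPolynomial

/-!
Adjacent transpositions generate the symmetric group, so it suffices that exchanging two neighbours
among `a_1, …, a_{n-3}` negates `{i, j, a, i} + {i, i, a, j}`. Away from the last two places each
brace already changes sign, because `φ_r φ_{r+1} = 0` makes the derivatives of consecutive linear
matrices anticommute. At the last two places `u, v`, the coefficient of `x_u x_v x_z` in
`φ_{m-1} φ_m = 0` shows that a brace ending in `u, v, z` plus its exchanged version is minus the
brace with its last three entries replaced by `z, u, v`. For the two braces these remainders are
`{i, j, …, i, u, v}` and `{i, i, …, j, u, v}`; anticommutation moves `i`, respectively `j`, to the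
third place, where the coefficient of `x_i² x_j` in `φ_1 φ_2 = 0` makes the two cancel.
-/

section LinearForms

variable {R σ : Type*} [CommSemiring R] {f : MvPolynomial σ R}

lemma pderiv_eq_C_of_isHomogeneous_one (hf : f.IsHomogeneous 1) (u : σ) :
    pderiv u f = C ((pderiv u f).coeff 0) :=
  totalDegree_eq_zero_iff_eq_C.mp ((totalDegree_zero_iff_isHomogeneous _).mpr hf.pderiv)

lemma pderiv_pderiv_of_isHomogeneous_one (hf : f.IsHomogeneous 1) (u v : σ) :
    pderiv u (pderiv v f) = 0 := by
  rw [pderiv_eq_C_of_isHomogeneous_one hf v, pderiv_C]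

lemma C_eval_pderiv_of_isHomogeneous_one (hf : f.IsHomogeneous 1) (x : σ → R) (u : σ) :
    C (eval x (pderiv u f)) = pderiv u f := by
  rw [pderiv_eq_C_of_isHomogeneous_one hf u, eval_C]

lemma C_eval_single_of_isHomogeneous_one [Finite σ] [DecidableEq σ] (hf : f.IsHomogeneous 1)
    (u : σ) : C (eval (Pi.single u 1) f) = pderiv u f := by
  cases nonempty_fintype σ
  have euler : eval (Pi.single u 1) f = eval (Pi.single u 1) (pderiv u f) := by
    simpa [Pi.single_apply] using congrArg (eval (Pi.single u 1)) hf.sum_X_mul_pderiv.symm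
  rw [euler, C_eval_pderiv_of_isHomogeneous_one hf]

end LinearForms

section QuadraticForms

variable {R σ : Type*} [CommSemiring R] [Fintype σ] [LinearOrder σ]

/-- The quadratic form `∑_{i ≤ j} Q(i,j) x_i x_j`. The coefficients form a full array, of which only
the part on and above the diagonal matters. -/
noncomputable def quadraticForm (Q : σ → σ → R) : MvPolynomial σ R :=
  ∑ i, ∑ j, if i ≤ j then C (Q i j) * X i * X j else 0

variable {Q : σ → σ → R}

lemma eval_single_quadraticForm (i : σ) : eval (Pi.single i 1) (quadraticForm Q) = Q i i := by
  have eval_term (k l : σ) :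
      eval (Pi.single i 1) (if k ≤ l then C (Q k l) * X k * X l else 0) =
        if k = i then if l = i then Q i i else 0 else 0 := by
    by_cases hk : k = i <;> by_cases hl : l = i <;> split_ifs <;> simp_all
  simp [quadraticForm, eval_term]

lemma pderiv_quadraticForm (hQ : ∀ i j, Q i j = Q j i) (v : σ) :
    pderiv v (quadraticForm Q) = ∑ k, C (Q v k) * X k + C (Q v v) * X v := by
  have split_sum : pderiv v (quadraticForm Q) =
      ∑ k, ((if k ≤ v then C (Q v k) * X k else 0) + if v ≤ k then C (Q v k) * X k else 0) := by
    have pderiv_term (i j : σ) : pderiv v (if i ≤ j then C (Q i j) * X i * X j else 0) =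
        (if j = v then if i ≤ v then C (Q v i) * X i else 0 else 0) +
          if i = v then if v ≤ j then C (Q v j) * X j else 0 else 0 := by
      by_cases hi : i = v <;> by_cases hj : j = v <;> split_ifs <;>
        simp_all [pderiv_X, mul_comm]
    simp only [quadraticForm, map_sum, pderiv_term, Finset.sum_add_distrib, Finset.sum_ite_eq',
      Finset.mem_univ, if_true]
    rw [Finset.sum_comm (γ := σ)]
    simp
  have sum_diagonal : C (Q v v) * X v = ∑ k, if k = v then C (Q v k) * X k else 0 := by simp
  rw [split_sum, sum_diagonal, ← Finset.sum_add_distrib]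
  refine Finset.sum_congr rfl fun k _ => ?_
  rcases lt_trichotomy k v with h | rfl | h
  · simp [h.le, h.not_ge, h.ne]
  · simp
  · simp [h.le, h.not_ge, h.ne']

lemma eval_single_pderiv_quadraticForm (hQ : ∀ i j, Q i j = Q j i) {i v : σ} (h : v ≠ i) :
    eval (Pi.single i 1) (pderiv v (quadraticForm Q)) = Q v i := by
  simp [pderiv_quadraticForm hQ, Pi.single_apply, h]

lemma pderiv_pderiv_quadraticForm (hQ : ∀ i j, Q i j = Q j i) {u v : σ} (h : u ≠ v) :
    pderiv u (pderiv v (quadraticForm Q)) = C (Q u v) := by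
  simp [pderiv_quadraticForm hQ, pderiv_X, Pi.single_apply, h.symm, hQ u v]

end QuadraticForms

section Relations

variable {R σ ι : Type*} [CommSemiring R] [Fintype ι] {f : ι → MvPolynomial σ R}

lemma pderiv_dotProduct_pderiv_add_swap_eq_zero {g : ι → MvPolynomial σ R}
    (hf : ∀ p, (f p).IsHomogeneous 1) (hg : ∀ p, (g p).IsHomogeneous 1) (hfg : f ⬝ᵥ g = 0)
    (u v : σ) : (pderiv u ∘ f) ⬝ᵥ (pderiv v ∘ g) + (pderiv v ∘ f) ⬝ᵥ (pderiv u ∘ g) = 0 := by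
  have h := congrArg (fun q => pderiv u (pderiv v q)) hfg
  simp only [dotProduct, map_sum, map_add, map_zero, pderiv_mul,
    pderiv_pderiv_of_isHomogeneous_one (hf _), pderiv_pderiv_of_isHomogeneous_one (hg _),
    zero_mul, mul_zero, zero_add, add_zero, Finset.sum_add_distrib] at h
  rw [add_comm]
  exact h

/-- The derivatives of the composable matrices `M`, `M'` anticommute. For matrices of linear forms
this is the vanishing of the coefficients of `x_u x_v` in `M * M'`, doubled when `u = v`. -/
def PderivAnticommute {R σ l m n : Type*} [CommRing R] [Fintype m]
    (M : Matrix l m (MvPolynomial σ R)) (M' : Matrix m n (MvPolynomial σ R)) : Prop :=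
  ∀ u v, M.map (pderiv u) * M'.map (pderiv v) = -(M.map (pderiv v) * M'.map (pderiv u))

lemma pderivAnticommute_of_mul_eq_zero {R σ l m n : Type*} [CommRing R] [Fintype m]
    {M : Matrix l m (MvPolynomial σ R)} {M' : Matrix m n (MvPolynomial σ R)}
    (hM : ∀ p q, (M p q).IsHomogeneous 1) (hM' : ∀ p q, (M' p q).IsHomogeneous 1)
    (hMM' : M * M' = 0) : PderivAnticommute M M' := fun u v =>
  eq_neg_of_add_eq_zero_left <| Matrix.ext fun p q =>
    pderiv_dotProduct_pderiv_add_swap_eq_zero (hM p) (hM' · q) (congrFun₂ hMM' p q) u v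

variable [Fintype σ] [LinearOrder σ] {Q : σ → σ → ι → R}

-- Differentiating twice in `x_i` would double the coefficient of `x_i² x_j`; evaluating at the
-- `i`-th basis point after one derivative in `x_j` extracts it in every characteristic.
lemma pderiv_dotProduct_C_add_eq_zero (hf : ∀ p, (f p).IsHomogeneous 1)
    (hQ : ∀ i j, Q i j = Q j i) (hfQ : f ⬝ᵥ (fun p => quadraticForm (Q · · p)) = 0)
    {i j : σ} (hij : i ≠ j) :
    (pderiv i ∘ f) ⬝ᵥ (fun p => C (Q i j p)) + (pderiv j ∘ f) ⬝ᵥ (fun p => C (Q i i p)) = 0 := by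
  have hQ' (p : ι) (k l : σ) : Q k l p = Q l k p := congrFun (hQ k l) p
  have h := congrArg (fun q => C (σ := σ) (eval (Pi.single i 1) (pderiv j q))) hfQ
  simp only [dotProduct, map_sum, map_add, map_mul, map_zero, pderiv_mul,
    eval_single_quadraticForm, eval_single_pderiv_quadraticForm (hQ' _) hij.symm, hQ j i,
    C_eval_pderiv_of_isHomogeneous_one (hf _), C_eval_single_of_isHomogeneous_one (hf _),
    Finset.sum_add_distrib] at h
  rw [add_comm]
  exact h

lemma pderiv_dotProduct_C_add_add_eq_zero (hf : ∀ p, (f p).IsHomogeneous 1)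
    (hQ : ∀ i j, Q i j = Q j i) (hfQ : f ⬝ᵥ (fun p => quadraticForm (Q · · p)) = 0)
    {u v w : σ} (huv : u ≠ v) (huw : u ≠ w) (hvw : v ≠ w) :
    (pderiv u ∘ f) ⬝ᵥ (fun p => C (Q v w p)) + (pderiv v ∘ f) ⬝ᵥ (fun p => C (Q u w p)) +
      (pderiv w ∘ f) ⬝ᵥ (fun p => C (Q u v p)) = 0 := by
  have hQ' (p : ι) (k l : σ) : Q k l p = Q l k p := congrFun (hQ k l) p
  have h := congrArg (fun q => pderiv u (pderiv v (pderiv w q))) hfQ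
  simp only [dotProduct, map_sum, map_add, map_zero, pderiv_mul, pderiv_C,
    pderiv_pderiv_of_isHomogeneous_one (hf _), pderiv_pderiv_quadraticForm (hQ' _) huv,
    pderiv_pderiv_quadraticForm (hQ' _) huw, pderiv_pderiv_quadraticForm (hQ' _) hvw,
    zero_mul, mul_zero, zero_add, add_zero, Finset.sum_add_distrib] at h
  rw [← h]
  simp only [dotProduct, Function.comp_apply]
  ring

end Relations

lemma eq_sign_smul_of_swap_castSucc_succ {l : ℕ} {M : Type*} [AddCommGroup M]
    {G : Equiv.Perm (Fin (l + 1)) → M}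
    (hG : ∀ τ (s : Fin l), G (τ * Equiv.swap s.castSucc s.succ) = -G τ)
    (τ : Equiv.Perm (Fin (l + 1))) : G τ = (Equiv.Perm.sign τ : ℤ) • G 1 := by
  have hτ : τ ∈ Submonoid.closure
      (Set.range fun s : Fin l => Equiv.swap s.castSucc s.succ) := by
    simp [Equiv.Perm.mclosure_swap_castSucc_succ]
  induction hτ using Submonoid.closure_induction_right with
  | one => simp
  | mul_right τ _ _ hs ih =>
    obtain ⟨s, rfl⟩ := hs
    simp [hG, ih, Equiv.Perm.sign_swap Fin.castSucc_lt_succ.ne]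

section BraceVec

variable {K : Type*} [Field K] {N : ℕ} {b : ℕ → ℕ}
  {φ : ∀ r : ℕ, Matrix (Fin (b r)) (Fin (b (r + 1))) (MvPolynomial (Fin N) K)}
  {P : Fin N → Fin N → Fin (b 1) → K}

lemma braceVec_succ (c : ℕ → Fin N) (r : ℕ) : braceVec φ P c (r + 1) =
    Matrix.vecMul (braceVec φ P c r) ((φ (r + 1)).map (pderiv (c (r + 2)))) := rfl

lemma braceVec_congr {c c' : ℕ → Fin N} {r : ℕ} (h : ∀ t < r + 2, c t = c' t) :
    braceVec φ P c r = braceVec φ P c' r := by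
  induction r with
  | zero => simp [braceVec, h]
  | succ r ih =>
    rw [braceVec_succ, braceVec_succ, ih fun t ht => h t (by omega), h (r + 2) (by omega)]

lemma braceVec_comp_swap {s : ℕ} (hs : PderivAnticommute (φ (s + 1)) (φ (s + 2)))
    (c : ℕ → Fin N) {r : ℕ} (hr : s + 2 ≤ r) :
    braceVec φ P (c ∘ Equiv.swap (s + 2) (s + 3)) r = -braceVec φ P c r := by
  induction r, hr using Nat.le_induction with
  | base =>
    have initial : braceVec φ P (c ∘ Equiv.swap (s + 2) (s + 3)) s = braceVec φ P c s :=
      braceVec_congr fun t ht => congrArg c <|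
        Equiv.swap_apply_of_ne_of_ne (by omega) (by omega)
    simp only [braceVec_succ, initial, Matrix.vecMul_vecMul, Function.comp_apply,
      Equiv.swap_apply_left, Equiv.swap_apply_right]
    rw [hs, Matrix.vecMul_neg]
  | succ r hr ih =>
    rw [braceVec_succ, braceVec_succ, ih, Matrix.neg_vecMul, Function.comp_apply,
      Equiv.swap_apply_of_ne_of_ne (by omega) (by omega)]

end BraceVec

section BraceSeq

variable {α : Type*} {l : ℕ}

/-- The sequence `x, y, a_1, …, a_l, z, z, …` of indices of a brace symbol; entries beyond the
first `z` are never read. -/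
def braceSeq (x y : α) (a : Fin l → α) (z : α) : ℕ → α := fun r =>
  if r = 0 then x else if r = 1 then y else if h : r - 2 < l then a ⟨r - 2, h⟩ else z

lemma braceSeq_add_two (x y : α) (a : Fin l → α) (z : α) {t : ℕ} (ht : t < l) :
    braceSeq x y a z (t + 2) = a ⟨t, ht⟩ := by
  simp [braceSeq, ht]

lemma braceSeq_last (x y : α) (a : Fin l → α) (z : α) : braceSeq x y a z (l + 2) = z := by
  simp [braceSeq]

lemma braceSeq_comp_swap (x y : α) (a : Fin l → α) (z : α) (p q : Fin l) :
    braceSeq x y (a ∘ Equiv.swap p q) z =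
      braceSeq x y a z ∘ Equiv.swap (p.val + 2) (q.val + 2) := by
  have swap_val (t : Fin l) :
      (Equiv.swap p q t).val + 2 = Equiv.swap (p.val + 2) (q.val + 2) (t.val + 2) :=
    Function.Injective.map_swap (f := fun t : Fin l => t.val + 2)
      (fun s t h => Fin.ext (Nat.add_right_cancel h)) p q t
  funext r
  by_cases hr : 2 ≤ r ∧ r < l + 2
  · obtain ⟨t, rfl⟩ : ∃ t : Fin l, r = t.val + 2 :=
      ⟨⟨r - 2, by omega⟩, (Nat.sub_add_cancel hr.1).symm⟩
    rw [Function.comp_apply, ← swap_val, braceSeq_add_two _ _ _ _ t.isLt,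
      braceSeq_add_two _ _ _ _ (Equiv.swap p q t).isLt, Function.comp_apply]
  · rw [Function.comp_apply, Equiv.swap_apply_of_ne_of_ne (by omega) (by omega)]
    grind [braceSeq]

end BraceSeq

section Braces

variable {K : Type*} [Field K] {N k : ℕ} {b : ℕ → ℕ}
  {φ : ∀ r : ℕ, Matrix (Fin (b r)) (Fin (b (r + 1))) (MvPolynomial (Fin N) K)}
  {P : Fin N → Fin N → Fin (b 1) → K} {Q : Fin N → Fin N → Fin (b (k + 2)) → K}

/-- The relations between the coefficient matrices of `φ_1, …, φ_m`, `m = k + 3`, that come from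
`φ_r φ_{r+1} = 0`: anticommutation between linear matrices, the vanishing of the coefficients of
`x_i² x_j` in `φ_1 φ_2`, and that of the squarefree coefficients in `φ_{m-1} φ_m`. As in `braceVec`,
`φ r` stands for `φ_{r+1}`, while `P` and `Q` stand for the outer matrices. -/
structure BraceRelations
    (φ : ∀ r : ℕ, Matrix (Fin (b r)) (Fin (b (r + 1))) (MvPolynomial (Fin N) K))
    (P : Fin N → Fin N → Fin (b 1) → K) (Q : Fin N → Fin N → Fin (b (k + 2)) → K) : Prop where
  anticommute : ∀ s < k, PderivAnticommute (φ (s + 1)) (φ (s + 2))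
  first : ∀ {i j}, i ≠ j → Matrix.vecMul (fun p => C (P i j p)) ((φ 1).map (pderiv i)) +
    Matrix.vecMul (fun p => C (P i i p)) ((φ 1).map (pderiv j)) = 0
  last : ∀ {u v w}, u ≠ v → u ≠ w → v ≠ w →
    Matrix.mulVec ((φ (k + 1)).map (pderiv u)) (fun p => C (Q v w p)) +
      Matrix.mulVec ((φ (k + 1)).map (pderiv v)) (fun p => C (Q u w p)) +
      Matrix.mulVec ((φ (k + 1)).map (pderiv w)) (fun p => C (Q u v p)) = 0

lemma BraceRelations.of_mul_eq_zero (hb_first : 0 < b 0) (hb_last : 0 < b (k + 3))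
    (hcomp : ∀ r ≤ k + 1, φ r * φ (r + 1) = 0)
    (hlin : ∀ r ≤ k, ∀ p q, (φ (r + 1) p q).IsHomogeneous 1)
    (hPsymm : ∀ i j, P i j = P j i) (hQsymm : ∀ i j, Q i j = Q j i)
    (hP : ∀ p q, φ 0 p q = quadraticForm (P · · q))
    (hQ : ∀ p q, φ (k + 2) p q = quadraticForm (Q · · p)) : BraceRelations φ P Q where
  anticommute s hs := pderivAnticommute_of_mul_eq_zero (hlin s hs.le) (hlin (s + 1) hs)
    (hcomp (s + 1) (by omega))
  first {i j} hij := funext fun q => by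
    have hφ : (fun p => φ 1 p q) ⬝ᵥ (fun p => quadraticForm (P · · p)) = 0 := by
      rw [dotProduct_comm, ← funext (hP ⟨0, hb_first⟩)]
      exact congrFun₂ (hcomp 0 (by omega)) ⟨0, hb_first⟩ q
    have h := pderiv_dotProduct_C_add_eq_zero
      (fun p => hlin 0 (by omega) p q) hPsymm hφ hij
    rwa [dotProduct_comm, dotProduct_comm (pderiv j ∘ _)] at h
  last huv huw hvw := funext fun p => by
    have hφ : φ (k + 1) p ⬝ᵥ (fun q => quadraticForm (Q · · q)) = 0 := by
      rw [← funext fun q => hQ q ⟨0, hb_last⟩]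
      exact congrFun₂ (hcomp (k + 1) le_rfl) p ⟨0, hb_last⟩
    exact pderiv_dotProduct_C_add_add_eq_zero (hlin k le_rfl p) hQsymm hφ huv huw hvw

lemma braceVec_vecMul_add_braceVec_vecMul_eq_zero (rel : BraceRelations φ P Q) {i j : Fin N}
    (hij : i ≠ j) {l : ℕ} (a : Fin l → Fin N) (z z' : Fin N) {r : ℕ} (hrl : r ≤ l) (hrk : r ≤ k) :
    Matrix.vecMul (braceVec φ P (braceSeq i j a z) r) ((φ (r + 1)).map (pderiv i)) +
      Matrix.vecMul (braceVec φ P (braceSeq i i a z') r) ((φ (r + 1)).map (pderiv j)) = 0 := by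
  induction r with
  | zero => exact rel.first hij
  | succ r ih =>
    have anti := rel.anticommute r hrk
    simp only [braceVec_succ, braceSeq_add_two _ _ _ _ hrl, Matrix.vecMul_vecMul]
    rw [anti _ i, anti _ j, Matrix.vecMul_neg, Matrix.vecMul_neg, ← Matrix.vecMul_vecMul,
      ← Matrix.vecMul_vecMul, ← neg_add, ← Matrix.add_vecMul, ih (by omega) (by omega),
      Matrix.zero_vecMul, neg_zero]

lemma braceFn_eq_dotProduct (c : ℕ → Fin N) : braceFn φ P (k + 3) Q rfl (k + 5) c =
    braceVec φ P c (k + 1) ⬝ᵥ fun p => C (Q (c (k + 3)) (c (k + 4)) p) := rfl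

lemma braceFn_comp_swap {s : ℕ} (hsk : s < k) (hs : PderivAnticommute (φ (s + 1)) (φ (s + 2)))
    (c : ℕ → Fin N) :
    braceFn φ P (k + 3) Q rfl (k + 5) (c ∘ Equiv.swap (s + 2) (s + 3)) =
      -braceFn φ P (k + 3) Q rfl (k + 5) c := by
  have swap_fix (t : ℕ) (ht : k + 3 ≤ t) : Equiv.swap (s + 2) (s + 3) t = t :=
    Equiv.swap_apply_of_ne_of_ne (by omega) (by omega)
  rw [braceFn_eq_dotProduct, braceFn_eq_dotProduct, braceVec_comp_swap hs c (by omega),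
    neg_dotProduct, Function.comp_apply, Function.comp_apply, swap_fix _ (by omega),
    swap_fix _ (by omega)]

lemma braceFn_comp_swap_last_add (rel : BraceRelations φ P Q) {c : ℕ → Fin N}
    (h₂₃ : c (k + 2) ≠ c (k + 3)) (h₂₄ : c (k + 2) ≠ c (k + 4)) (h₃₄ : c (k + 3) ≠ c (k + 4)) :
    braceFn φ P (k + 3) Q rfl (k + 5) (c ∘ Equiv.swap (k + 2) (k + 3)) +
        braceFn φ P (k + 3) Q rfl (k + 5) c =
      -(Matrix.vecMul (braceVec φ P c k) ((φ (k + 1)).map (pderiv (c (k + 4)))) ⬝ᵥ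
        fun p => C (Q (c (k + 2)) (c (k + 3)) p)) := by
  have initial : braceVec φ P (c ∘ Equiv.swap (k + 2) (k + 3)) k = braceVec φ P c k :=
    braceVec_congr fun t ht => congrArg c <| Equiv.swap_apply_of_ne_of_ne (by omega) (by omega)
  have last_fix : Equiv.swap (k + 2) (k + 3) (k + 4) = k + 4 :=
    Equiv.swap_apply_of_ne_of_ne (by omega) (by omega)
  have relation := congrArg (braceVec φ P c k ⬝ᵥ ·) (rel.last h₂₃ h₂₄ h₃₄)
  simp only [dotProduct_add, Matrix.dotProduct_mulVec, dotProduct_zero] at relation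
  simp only [braceFn_eq_dotProduct, braceVec_succ, initial, Function.comp_apply,
    Equiv.swap_apply_left, Equiv.swap_apply_right, last_fix]
  linear_combination relation

/-- The sum `{i, j, a_1, …, a_l, i} + {i, i, a_1, …, a_l, j}` of two brace symbols. -/
noncomputable def braceSum
    (φ : ∀ r : ℕ, Matrix (Fin (b r)) (Fin (b (r + 1))) (MvPolynomial (Fin N) K))
    (P : Fin N → Fin N → Fin (b 1) → K) (m : ℕ) (Q : Fin N → Fin N → Fin (b (m - 1)) → K)
    (h : m - 1 = m - 2 + 1) (n : ℕ) (i j : Fin N) {l : ℕ} (a : Fin l → Fin N) :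
    MvPolynomial (Fin N) K :=
  braceFn φ P m Q h n (braceSeq i j a i) + braceFn φ P m Q h n (braceSeq i i a j)

lemma braceSum_comp_swap_last (rel : BraceRelations φ P Q) {i j : Fin N} (hij : i ≠ j)
    {a : Fin (k + 2) → Fin N} (ha : Function.Injective a) (hai : ∀ s, a s ≠ i)
    (haj : ∀ s, a s ≠ j) :
    braceSum φ P (k + 3) Q rfl (k + 5) i j
        (a ∘ Equiv.swap (Fin.last k).castSucc (Fin.last k).succ) =
      -braceSum φ P (k + 3) Q rfl (k + 5) i j a := by
  have ha_ne : a ⟨k, by omega⟩ ≠ a ⟨k + 1, by omega⟩ := ha.ne (by simp)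
  have entries (y z : Fin N) : braceSeq i y a z (k + 2) = a ⟨k, by omega⟩ ∧
      braceSeq i y a z (k + 3) = a ⟨k + 1, by omega⟩ ∧ braceSeq i y a z (k + 4) = z :=
    ⟨braceSeq_add_two _ _ _ _ _, braceSeq_add_two _ _ _ _ _, braceSeq_last _ _ _ _⟩
  have swap_add (y z : Fin N) (haz : ∀ s, a s ≠ z) :=
    braceFn_comp_swap_last_add rel (c := braceSeq i y a z)
      (by simpa only [entries] using ha_ne) (by simpa only [entries] using haz _)
      (by simpa only [entries] using haz _)
  have transfer := congrArg (· ⬝ᵥ fun p => C (Q (a ⟨k, by omega⟩) (a ⟨k + 1, by omega⟩) p))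
    (braceVec_vecMul_add_braceVec_vecMul_eq_zero rel hij a i j (Nat.le_add_right k 2) le_rfl)
  simp only [add_dotProduct, zero_dotProduct] at transfer
  have swap_add_i := swap_add j i hai
  have swap_add_j := swap_add i j haj
  simp only [entries] at swap_add_i swap_add_j
  simp only [braceSum, braceSeq_comp_swap, Fin.val_castSucc, Fin.val_succ, Fin.val_last]
  linear_combination swap_add_i + swap_add_j - transfer

lemma braceSum_comp_swap_castSucc_succ (rel : BraceRelations φ P Q) {i j : Fin N} (hij : i ≠ j)
    {a : Fin (k + 2) → Fin N} (ha : Function.Injective a) (hai : ∀ s, a s ≠ i)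
    (haj : ∀ s, a s ≠ j) (s : Fin (k + 1)) :
    braceSum φ P (k + 3) Q rfl (k + 5) i j (a ∘ Equiv.swap s.castSucc s.succ) =
      -braceSum φ P (k + 3) Q rfl (k + 5) i j a := by
  induction s using Fin.lastCases with
  | last => exact braceSum_comp_swap_last rel hij ha hai haj
  | cast s =>
    have swap_neg := braceFn_comp_swap (P := P) (Q := Q) s.isLt (rel.anticommute s s.isLt)
    simp only [braceSum, braceSeq_comp_swap, Fin.val_castSucc, Fin.val_succ]
    rw [swap_neg, swap_neg, neg_add]

lemma braceSum_comp_perm (rel : BraceRelations φ P Q) {i j : Fin N} (hij : i ≠ j)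
    {a : Fin (k + 2) → Fin N} (ha : Function.Injective a) (hai : ∀ s, a s ≠ i)
    (haj : ∀ s, a s ≠ j) (τ : Equiv.Perm (Fin (k + 2))) :
    braceSum φ P (k + 3) Q rfl (k + 5) i j (a ∘ τ) =
      (Equiv.Perm.sign τ : ℤ) • braceSum φ P (k + 3) Q rfl (k + 5) i j a :=
  eq_sign_smul_of_swap_castSucc_succ
    (G := fun τ => braceSum φ P (k + 3) Q rfl (k + 5) i j (a ∘ τ))
    (fun τ s => braceSum_comp_swap_castSucc_succ rel hij (ha.comp τ.injective)
      (fun t => hai (τ t)) (fun t => haj (τ t)) s) τ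

end Braces

theorem stmt15_general {K : Type*} [Field K] {N n m : ℕ} (hn : 5 ≤ n) (hm : m = n - 2)
    {b : ℕ → ℕ} (hb_first : 0 < b 0) (hb_last : 0 < b m)
    (φ : ∀ r : ℕ, Matrix (Fin (b r)) (Fin (b (r + 1))) (MvPolynomial (Fin N) K))
    (hcomp : ∀ r, r + 2 ≤ m → φ r * φ (r + 1) = 0)
    (hlin : ∀ r, 1 ≤ r → r + 2 ≤ m → ∀ p q, (φ r p q).IsHomogeneous 1)
    (P : Fin N → Fin N → Fin (b 1) → K) (Q : Fin N → Fin N → Fin (b (m - 1)) → K)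
    (hPsymm : ∀ i j, P i j = P j i) (hQsymm : ∀ i j, Q i j = Q j i)
    (hP : ∀ p q, φ 0 p q = quadraticForm (P · · q))
    (hQ : ∀ p q, φ (m - 1) p q = quadraticForm (Q · · p))
    {i j : Fin N} (hij : i ≠ j) {a : Fin (n - 3) → Fin N} (ha : Function.Injective a)
    (hai : ∀ s, a s ≠ i) (haj : ∀ s, a s ≠ j) (τ : Equiv.Perm (Fin (n - 3))) :
    (Equiv.Perm.sign τ : ℤ) • braceSum φ P m Q (by omega) n i j (a ∘ τ) =
      braceSum φ P m Q (by omega) n i j a := by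
  obtain ⟨k, rfl⟩ : ∃ k, n = k + 5 := ⟨n - 5, by omega⟩
  obtain rfl : m = k + 3 := by omega
  have rel : BraceRelations (k := k) φ P Q := .of_mul_eq_zero hb_first hb_last
    (fun r hr => hcomp r (by omega)) (fun r hr => hlin (r + 1) (by omega) (by omega))
    hPsymm hQsymm hP hQ
  change (Equiv.Perm.sign τ : ℤ) • braceSum φ P (k + 3) Q rfl (k + 5) i j (a ∘ τ) = _
  rw [braceSum_comp_perm rel hij ha hai haj, smul_smul, Int.units_coe_mul_self, one_smul]

/-- In the brace setup (`n ≥ 5`), for distinct `i, j`, let `e` be the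
increasing enumeration of `{1,…,n−1} \\ {i,j}` and let a permutation `τ ∈ S_{n−3}` give the
middle entries `a_s = e(τ(s))` with `ν = sign(τ)`. Then
`A = ν·({i, j, a_1, …, a_{n−3}, i} + {i, i, a_1, …, a_{n−3}, j})` is independent of `τ`. -/
theorem stmt15 (K : Type*) [Field K] (n : ℕ) (hn : 5 ≤ n) (m : ℕ) (hm : m = n - 2)
    (b : ℕ → ℕ) (hbpos : ∀ r, r ≤ m → 0 < b r) (hb0 : b 0 = 1) (hbm : b m = 1)
    (φ : ∀ r : ℕ, Matrix (Fin (b r)) (Fin (b (r + 1))) (MvPolynomial (Fin (n - 1)) K))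
    (hcomp : ∀ r, r + 2 ≤ m → φ r * φ (r + 1) = 0)
    (hdeg1 : ∀ p q, (φ 0 p q).IsHomogeneous 2)
    (hdegm : ∀ p q, (φ (m - 1) p q).IsHomogeneous 2)
    (hdegmid : ∀ r, 1 ≤ r → r + 2 ≤ m → ∀ p q, (φ r p q).IsHomogeneous 1)
    (P : Fin (n - 1) → Fin (n - 1) → Fin (b 1) → K)
    (Q : Fin (n - 1) → Fin (n - 1) → Fin (b (m - 1)) → K)
    (hPsymm : ∀ i j, P i j = P j i) (hQsymm : ∀ i j, Q i j = Q j i)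
    (hP : ∀ (p : Fin (b 0)) (q : Fin (b 1)),
      φ 0 p q = ∑ i : Fin (n - 1), ∑ j : Fin (n - 1),
        if i ≤ j then C (P i j q) * X i * X j else 0)
    (hQ : ∀ (p : Fin (b (m - 1))) (q : Fin (b (m - 1 + 1))),
      φ (m - 1) p q = ∑ i : Fin (n - 1), ∑ j : Fin (n - 1),
        if i ≤ j then C (Q i j p) * X i * X j else 0)
    (i j : Fin (n - 1)) (hij : i ≠ j)
    (e : Fin (n - 3) → Fin (n - 1)) (he : StrictMono e)
    (hrange : ∀ x : Fin (n - 1), (∃ s, e s = x) ↔ (x ≠ i ∧ x ≠ j))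
    (τ₁ τ₂ : Equiv.Perm (Fin (n - 3))) :
    (Equiv.Perm.sign τ₁ : ℤ) •
        (braceFn φ P m Q (by omega) n
            (fun r => if r = 0 then i else if r = 1 then j
              else if h : r - 2 < n - 3 then e (τ₁ ⟨r - 2, h⟩) else i)
          + braceFn φ P m Q (by omega) n
              (fun r => if r = 0 then i else if r = 1 then i
                else if h : r - 2 < n - 3 then e (τ₁ ⟨r - 2, h⟩) else j))
      = (Equiv.Perm.sign τ₂ : ℤ) •
          (braceFn φ P m Q (by omega) n
              (fun r => if r = 0 then i else if r = 1 then j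
                else if h : r - 2 < n - 3 then e (τ₂ ⟨r - 2, h⟩) else i)
            + braceFn φ P m Q (by omega) n
                (fun r => if r = 0 then i else if r = 1 then i
                  else if h : r - 2 < n - 3 then e (τ₂ ⟨r - 2, h⟩) else j)) := by
  have signed_braceSum := stmt15_general hn hm (hbpos 0 m.zero_le) (hbpos m le_rfl) φ hcomp hdegmid
    P Q hPsymm hQsymm hP hQ hij he.injective (fun s => ((hrange _).mp ⟨s, rfl⟩).1)
    (fun s => ((hrange _).mp ⟨s, rfl⟩).2)
  exact (signed_braceSum τ₁).trans (signed_braceSum τ₂).symm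
end
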